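/- Each reference point α on the pseudo-sphere S^{3,4} gives a parallelization: let α and x be split octonions with N(α) = 1 and N(x) = 1, and for i ∈ {1,…,7} set tᵢ := (eᵢ·α)·(conj(α)·x). Then B(tᵢ, x) = 0 for each i, and B(tᵢ, tⱼ) = ηᵢⱼ for all i, j, where η = diag(1,1,1,−1,−1,−1,−1). -/

import Mathlib

/-- The split octonions, realized via the Cayley–Dickson construction as pairs
of real quaternions. -/
abbrev SplitOctonion : Type := Quaternion ℝ × Quaternion ℝ

/-- Cayley–Dickson multiplication for split octonions:
`(a,b)·(c,d) = (a c + d̄ b, d a + b c̄)`. -/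
noncomputable def soMul (x y : SplitOctonion) : SplitOctonion :=
  (x.1 * y.1 + star y.2 * x.2, y.2 * x.1 + x.2 * star y.1)

/-- Split-octonionic conjugation: `conj (a,b) = (ā, −b)`. -/
noncomputable def soConj (x : SplitOctonion) : SplitOctonion := (star x.1, -x.2)

/-- The split-octonionic norm: `N (a,b) = ‖a‖² − ‖b‖²` (difference of
quaternionic norm-squares). -/
noncomputable def soN (x : SplitOctonion) : ℝ :=
  Quaternion.normSq x.1 - Quaternion.normSq x.2

/-- The bilinear form associated with the split-octonionic norm. -/
noncomputable def soB (u v : SplitOctonion) : ℝ :=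
  (soN (u + v) - soN u - soN v) / 2

/-- The seven imaginary units of the split octonions. -/
noncomputable def soUnit : Fin 7 → SplitOctonion :=
  ![((⟨0, 1, 0, 0⟩ : Quaternion ℝ), 0),
    ((⟨0, 0, 1, 0⟩ : Quaternion ℝ), 0),
    ((⟨0, 0, 0, 1⟩ : Quaternion ℝ), 0),
    (0, 1),
    (0, (⟨0, 1, 0, 0⟩ : Quaternion ℝ)),
    (0, (⟨0, 0, 1, 0⟩ : Quaternion ℝ)),
    (0, (⟨0, 0, 0, 1⟩ : Quaternion ℝ))]

/-- The flat metric `η = diag(1,1,1,−1,−1,−1,−1)` of signature `(3,4)`. -/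
def eta34 (i j : Fin 7) : ℝ :=
  if i = j then (if (i : ℕ) < 3 then 1 else -1) else 0

theorem soN_mul (x y : SplitOctonion) : soN (soMul x y) = soN x * soN y := by
  obtain ⟨a, b⟩ := x
  obtain ⟨c, d⟩ := y
  simp only [soN, soMul, Quaternion.normSq_def', Quaternion.re_add, Quaternion.imI_add,
    Quaternion.imJ_add, Quaternion.imK_add, Quaternion.re_mul, Quaternion.imI_mul,
    Quaternion.imJ_mul, Quaternion.imK_mul, Quaternion.re_star, Quaternion.imI_star,
    Quaternion.imJ_star, Quaternion.imK_star]
  ring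

theorem soMul_add_left (u v y : SplitOctonion) :
    soMul (u + v) y = soMul u y + soMul v y := by
  simp only [soMul, Prod.mk_add_mk, Prod.fst_add, Prod.snd_add]
  ext1 <;> simp only [mul_add, add_mul] <;> abel

theorem soB_mul_right (u v y : SplitOctonion) :
    soB (soMul u y) (soMul v y) = soB u v * soN y := by
  simp only [soB, ← soMul_add_left, soN_mul]
  ring

theorem soN_conj (x : SplitOctonion) : soN (soConj x) = soN x := by
  simp [soN, soConj]

theorem soMul_one_left (x : SplitOctonion) : soMul (1, 0) x = x := by
  simp [soMul]

theorem soMul_conj_cancel (α x : SplitOctonion) (h : soN α = 1) :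
    soMul α (soMul (soConj α) x) = x := by
  have h2 : soMul α (soMul (soConj α) x) = soN α • x := by
    obtain ⟨a, b⟩ := α
    obtain ⟨c, d⟩ := x
    ext <;>
    simp only [soN, soMul, soConj, Prod.smul_mk, Quaternion.normSq_def', Quaternion.re_add,
      Quaternion.imI_add,
      Quaternion.imJ_add, Quaternion.imK_add, Quaternion.re_mul, Quaternion.imI_mul,
      Quaternion.imJ_mul, Quaternion.imK_mul, Quaternion.re_star, Quaternion.imI_star,
      Quaternion.imJ_star, Quaternion.imK_star, Quaternion.re_neg, Quaternion.imI_neg,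
      Quaternion.imJ_neg, Quaternion.imK_neg, Quaternion.re_smul, Quaternion.imI_smul,
      Quaternion.imJ_smul, Quaternion.imK_smul, smul_eq_mul] <;>
    ring
  rw [h2, h, one_smul]

theorem soB_coord (u v : SplitOctonion) : soB u v =
    u.1.re * v.1.re + u.1.imI * v.1.imI + u.1.imJ * v.1.imJ + u.1.imK * v.1.imK
    - u.2.re * v.2.re - u.2.imI * v.2.imI - u.2.imJ * v.2.imJ - u.2.imK * v.2.imK := by
  simp only [soB, soN, Quaternion.normSq_def', Prod.fst_add, Prod.snd_add, Quaternion.re_add,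
    Quaternion.imI_add, Quaternion.imJ_add, Quaternion.imK_add]
  ring

theorem soUnit_1_re (i : Fin 7) : (soUnit i).1.re = (![0,0,0,0,0,0,0] : Fin 7 → ℝ) i := by
  fin_cases i <;> rfl

theorem soUnit_1_imI (i : Fin 7) : (soUnit i).1.imI = (![1,0,0,0,0,0,0] : Fin 7 → ℝ) i := by
  fin_cases i <;> rfl

theorem soUnit_1_imJ (i : Fin 7) : (soUnit i).1.imJ = (![0,1,0,0,0,0,0] : Fin 7 → ℝ) i := by
  fin_cases i <;> rfl

theorem soUnit_1_imK (i : Fin 7) : (soUnit i).1.imK = (![0,0,1,0,0,0,0] : Fin 7 → ℝ) i := by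
  fin_cases i <;> rfl

theorem soUnit_2_re (i : Fin 7) : (soUnit i).2.re = (![0,0,0,1,0,0,0] : Fin 7 → ℝ) i := by
  fin_cases i <;> rfl

theorem soUnit_2_imI (i : Fin 7) : (soUnit i).2.imI = (![0,0,0,0,1,0,0] : Fin 7 → ℝ) i := by
  fin_cases i <;> rfl

theorem soUnit_2_imJ (i : Fin 7) : (soUnit i).2.imJ = (![0,0,0,0,0,1,0] : Fin 7 → ℝ) i := by
  fin_cases i <;> rfl

theorem soUnit_2_imK (i : Fin 7) : (soUnit i).2.imK = (![0,0,0,0,0,0,1] : Fin 7 → ℝ) i := by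
  fin_cases i <;> rfl

theorem soB_unit_one (i : Fin 7) : soB (soUnit i) (1, 0) = 0 := by
  simp only [soB_coord, soUnit_1_re, soUnit_1_imI, soUnit_1_imJ, soUnit_1_imK,
    soUnit_2_re, soUnit_2_imI, soUnit_2_imJ, soUnit_2_imK]
  fin_cases i <;> simp <;> rfl

theorem soB_unit (i j : Fin 7) : soB (soUnit i) (soUnit j) = eta34 i j := by
  simp only [soB_coord, soUnit_1_re, soUnit_1_imI, soUnit_1_imJ, soUnit_1_imK,
    soUnit_2_re, soUnit_2_imI, soUnit_2_imJ, soUnit_2_imK]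
  fin_cases i <;> fin_cases j <;> simp [eta34]

/-- Every reference point `α` on the pseudo-sphere `S^{3,4}` gives a
parallelization: if `N(α) = 1 = N(x)`, the vectors `tᵢ = (eᵢ·α)·(ᾱ·x)` are
orthogonal to `x` and form a Lorentz-orthonormal frame at `x`. -/
theorem splitOctonion_parallelization_ref (α x : SplitOctonion)
    (hα : soN α = 1) (hx : soN x = 1)
    (t : Fin 7 → SplitOctonion)
    (ht : ∀ i, t i = soMul (soMul (soUnit i) α) (soMul (soConj α) x)) :
    (∀ i : Fin 7, soB (t i) x = 0) ∧
    (∀ i j : Fin 7, soB (t i) (t j) = eta34 i j) := by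
  have hy : soN (soMul (soConj α) x) = 1 := by rw [soN_mul, soN_conj, hα, hx, one_mul]
  refine ⟨fun i => ?_, fun i j => ?_⟩
  · have h := soB_mul_right (soMul (soUnit i) α) (soMul (1, 0) α) (soMul (soConj α) x)
    rw [soB_mul_right (soUnit i), soB_unit_one, soMul_one_left, soMul_conj_cancel α x hα] at h
    rw [ht, h]
    simp
  · rw [ht, ht, soB_mul_right, soB_mul_right, hα, hy, soB_unit]
    ring
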